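/- Let z be a complex number. Then ∫_{0 ↗ 1} (e^{iπu² + 2πizu}/(e^{iπu} − e^{−iπu})) du = ∫_{0 ↖ 1} (e^{−iπu² + iπu}/(e^{−2πiu} − 1))·e^{−iπz² + 2πi(u − 1/2)z} du. (This is the integral transformation formula of the Mordell integral specialized to τ = 1 and x = z + 1/2.) -/

import Mathlib

open scoped Real
open MeasureTheory Set Complex

/-- Integral along the straight line `t ↦ c + e^{iθ} t`, `t ∈ ℝ`. -/
noncomputable def lineInt (c θ : ℝ) (f : ℂ → ℂ) : ℂ :=
  ∫ t : ℝ, f ((c : ℂ) + Complex.exp ((θ : ℂ) * Complex.I) * (t : ℂ)) *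
    Complex.exp ((θ : ℂ) * Complex.I)

lemma strip_shift (g : ℂ → ℂ) (a b C : ℝ) (hab : a ≤ b)
    (hg : DifferentiableOn ℂ g {w | w.im ∈ Icc a b})
    (ha : Integrable (fun t : ℝ => g (t + a * I)))
    (hb : Integrable (fun t : ℝ => g (t + b * I)))
    (hbd : ∀ t y : ℝ, 3 ≤ |t| → y ∈ Icc a b → ‖g (t + y * I)‖ ≤ C * Real.exp (-1 * t ^ 2)) :
    ∫ t : ℝ, g (t + a * I) = ∫ t : ℝ, g (t + b * I) := by
  have h1 := MeasureTheory.intervalIntegral_tendsto_integral ha Filter.tendsto_neg_atTop_atBot Filter.tendsto_id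
  have h2 := MeasureTheory.intervalIntegral_tendsto_integral hb Filter.tendsto_neg_atTop_atBot Filter.tendsto_id
  have hE : Filter.Tendsto (fun T : ℝ => C * Real.exp (-1 * T ^ 2) * |b - a|) Filter.atTop (nhds 0) := by
    have : Filter.Tendsto (fun T : ℝ => Real.exp (-1 * T ^ 2)) Filter.atTop (nhds 0) := by
      apply Real.tendsto_exp_atBot.comp
      apply Filter.Tendsto.const_mul_atTop_of_neg (by norm_num)
      exact Filter.tendsto_pow_atTop (by norm_num)
    simpa using (this.const_mul C).mul_const |b - a|
  have key : ∀ s : ℝ → ℝ, (∀ T, |s T| = |T|) →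
      Filter.Tendsto (fun T : ℝ => I • ∫ y in a..b, g ((s T : ℝ) + y * I)) Filter.atTop (nhds 0) := by
    intro s hs
    apply squeeze_zero_norm' _ hE
    filter_upwards [Filter.eventually_ge_atTop 3] with T hT
    rw [norm_smul, Complex.norm_I, one_mul]
    apply intervalIntegral.norm_integral_le_of_norm_le_const
    intro y hy
    rw [uIoc_of_le hab] at hy
    have h3 : 3 ≤ |s T| := by rw [hs]; exact hT.trans (le_abs_self _)
    have := hbd (s T) y h3 ⟨hy.1.le, hy.2⟩
    rwa [← sq_abs (s T), hs, sq_abs] at this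
  have k1 := key id (fun _ => rfl)
  have k2 := key (fun T => -T) (fun T => abs_neg T)
  have hsum := ((h1.sub h2).add k1).sub k2
  have hz : ∀ T : ℝ, (∫ x in (-T)..(id T), g (x + a * I)) - (∫ x in (-T)..(id T), g (x + b * I))
     + (I • ∫ y in a..b, g ((id T : ℝ) + y * I)) - (I • ∫ y in a..b, g ((-T : ℝ) + y * I)) = 0 := by
    intro T
    have := Complex.integral_boundary_rect_eq_zero_of_differentiableOn g (⟨-T, a⟩) (⟨T, b⟩) (by
      apply hg.mono
      rintro w ⟨_, hw⟩
      simpa [uIcc_of_le hab] using hw)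
    simpa using this
  have hz0 := hsum.congr hz
  have := tendsto_nhds_unique hz0 tendsto_const_nhds
  simp only [add_zero, sub_zero] at this
  exact sub_eq_zero.mp this

noncomputable def om : ℂ := Complex.exp (((π / 4 : ℝ) : ℂ) * I)

lemma om_re : om.re = √2 / 2 := by
  rw [om, Complex.exp_ofReal_mul_I_re, Real.cos_pi_div_four]
lemma om_im : om.im = √2 / 2 := by
  rw [om, Complex.exp_ofReal_mul_I_im, Real.sin_pi_div_four]
lemma om_norm : ‖om‖ = 1 := by rw [om, Complex.norm_exp_ofReal_mul_I]
lemma sq2 : √2 * √2 = 2 := Real.mul_self_sqrt (by norm_num)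
lemma om_sq : om ^ 2 = I := by
  rw [sq]
  apply Complex.ext
  · simp [om_re, om_im]
  · simp only [Complex.mul_im, om_re, om_im, I_im]; nlinarith [sq2]

noncomputable def qq (u : ℂ) : ℂ :=
  Complex.exp ((π : ℂ) * Complex.I * u) - Complex.exp (-((π : ℂ) * Complex.I * u))

noncomputable def num (z u : ℂ) : ℂ :=
  Complex.exp ((π : ℂ) * Complex.I * u ^ 2 + 2 * (π : ℂ) * Complex.I * z * u)

noncomputable def KK (M : ℝ) : ℝ := Real.exp (4 * π * (1 + M) + (4 * π * (1 + M)) ^ 2 / 4)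

lemma num_bound (z : ℂ) (M c t y : ℝ) (hM : ‖z‖ ≤ M) (hc : 0 < c) (hc' : c < 1) (hy : |y| ≤ 1) :
    ‖num z (c + om * (t + y * I))‖ ≤ KK M * Real.exp (-1 * t ^ 2) := by
  have hM0 : 0 ≤ M := (norm_nonneg _).trans hM
  have hpi := Real.pi_gt_three
  rw [num, KK, Complex.norm_exp, ← Real.exp_add]
  apply Real.exp_le_exp.mpr
  set w : ℂ := t + y * I with hw
  have hwn : ‖w‖ ≤ |t| + 1 := by
    refine (norm_add_le _ _).trans ?_
    simp only [norm_mul, Complex.norm_real, Complex.norm_I, Real.norm_eq_abs]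
    linarith
  have e : (π : ℂ) * I * (c + om * w) ^ 2 + 2 * π * I * z * (c + om * w)
      = (-(π : ℂ) * w ^ 2) + (π * I * c ^ 2 + 2 * π * I * c * om * w + 2 * π * I * z * (c + om * w)) := by
    linear_combination (π : ℂ) * I * w ^ 2 * om_sq + (π : ℂ) * w ^ 2 * I_mul_I
  rw [e, Complex.add_re]
  have e1 : (-(π : ℂ) * w ^ 2).re = -π * (t ^ 2 - y ^ 2) := by
    rw [hw]; simp [sq]
  have e2 : (π * I * c ^ 2 + 2 * π * I * c * om * w + 2 * π * I * z * (c + om * w)).re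
      ≤ π * c ^ 2 + 2 * π * c * (|t| + 1) + 2 * π * M * (c + (|t| + 1)) := by
    refine (Complex.re_le_norm _).trans ?_
    refine (norm_add_le _ _).trans ?_
    refine add_le_add ((norm_add_le _ _).trans ?_) ?_
    · simp only [norm_mul, norm_pow, Complex.norm_real, Complex.norm_I, Real.norm_eq_abs, om_norm,
        abs_of_pos Real.pi_pos, abs_of_pos hc, Complex.norm_ofNat, mul_one]
      gcongr
    · have : ‖(c : ℂ) + om * w‖ ≤ c + (|t| + 1) := by
        refine (norm_add_le _ _).trans ?_
        simp only [norm_mul, Complex.norm_real, Real.norm_eq_abs, om_norm, abs_of_pos hc, one_mul]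
        gcongr
      rw [norm_mul]
      simp only [norm_mul, Complex.norm_real, Complex.norm_I, Real.norm_eq_abs,
        abs_of_pos Real.pi_pos, Complex.norm_ofNat, mul_one]
      gcongr
  rw [e1]
  have hy2 : y ^ 2 ≤ 1 := by rw [← sq_abs]; nlinarith [abs_nonneg y]
  have ht := abs_nonneg t
  have f1 : π * c ^ 2 ≤ π := by
    have : c ^ 2 ≤ 1 := by nlinarith
    nlinarith
  have f2 : 2 * π * c * (|t| + 1) ≤ 2 * π * (|t| + 1) := by
    have : 0 ≤ 2 * π * (|t| + 1) := by positivity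
    nlinarith
  have f3 : 2 * π * M * (c + (|t| + 1)) ≤ 2 * π * M * (|t| + 2) := by
    have : 0 ≤ 2 * π * M := by positivity
    nlinarith
  have f4 : π * y ^ 2 ≤ π := by nlinarith
  set A := 4 * π * (1 + M) with hA
  have hM' : 0 ≤ π * M := by positivity
  have f5 : π + π + 2 * π * (|t| + 1) + 2 * π * M * (|t| + 2) ≤ A + A * |t| := by
    rw [hA]; nlinarith [mul_nonneg hM' ht, mul_nonneg Real.pi_pos.le ht]
  have f6 : A * |t| ≤ t ^ 2 + A ^ 2 / 4 := by
    rw [← sq_abs t]; nlinarith [sq_nonneg (|t| - A / 2)]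
  nlinarith [sq_nonneg t]

lemma q_bound (c t y : ℝ) (hy : |y| ≤ 1) (ht : 3 ≤ |t|) : 1 ≤ ‖qq (c + om * (t + y * I))‖ := by
  have hpi := Real.pi_gt_three
  set u := (c + om * (t + y * I) : ℂ) with hu
  have him : u.im = √2 / 2 * (t + y) := by
    rw [hu]; simp [om_re, om_im]; ring
  have h1 : ‖Complex.exp ((π : ℂ) * I * u)‖ = Real.exp (-(π * u.im)) := by
    rw [Complex.norm_exp]; simp
  have h2 : ‖Complex.exp (-((π : ℂ) * I * u))‖ = Real.exp (π * u.im) := by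
    rw [Complex.norm_exp]; simp
  have h3 := abs_norm_sub_norm_le (Complex.exp ((π : ℂ) * I * u)) (Complex.exp (-((π : ℂ) * I * u)))
  rw [h1, h2] at h3
  refine le_trans ?_ h3
  have hs : 1 ≤ √2 := by rw [Real.one_le_sqrt]; norm_num
  have aux : ∀ x : ℝ, 3 ≤ x → 1 ≤ Real.exp x - Real.exp (-x) := by
    intro x hx
    have := Real.add_one_le_exp x
    have : Real.exp (-x) ≤ 1 := Real.exp_le_one_iff.mpr (by linarith)
    linarith
  obtain ⟨hy1, hy2⟩ := abs_le.mp hy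
  rcases le_abs'.mp ht with h | h
  · have hx : 3 ≤ -(π * u.im) := by
      have : u.im ≤ -1 := by rw [him]; nlinarith
      nlinarith
    have := aux _ hx
    rw [neg_neg] at this
    exact this.trans (le_abs_self _)
  · have hx : 3 ≤ (π * u.im) := by
      have : 1 ≤ u.im := by rw [him]; nlinarith
      nlinarith
    have := aux _ hx
    rw [abs_sub_comm]
    exact this.trans (le_abs_self _)

lemma q_zero {u : ℂ} (h : qq u = 0) : ∃ n : ℤ, u = n := by
  have h1 : Complex.exp (2 * π * I * u) = 1 := by
    have : Complex.exp ((π : ℂ) * I * u) = Complex.exp (-((π : ℂ) * I * u)) := sub_eq_zero.mp h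
    have e : (2 * π * I * u : ℂ) = π * I * u + π * I * u := by ring
    rw [e, Complex.exp_add]
    nth_rewrite 2 [this]
    rw [← Complex.exp_add]; simp
  obtain ⟨n, hn⟩ := Complex.exp_eq_one_iff.mp h1
  refine ⟨n, ?_⟩
  have : (2 * π * I : ℂ) ≠ 0 := Complex.two_pi_I_ne_zero
  apply mul_left_cancel₀ this
  rw [hn]; ring

lemma q_strip {c t y : ℝ} (hc : 0 < c) (hc' : c < 1) (hy : y ∈ Icc (-(√2 / 2)) 0)
    (h : qq (c + om * (t + y * I)) = 0) : (c + om * (t + y * I) : ℂ) = 1 := by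
  obtain ⟨n, hn⟩ := q_zero h
  have hre := congrArg Complex.re hn
  have him := congrArg Complex.im hn
  simp [om_re, om_im] at hre him
  have hs : 0 < √2 := by positivity
  have hty : t + y = 0 := by
    have : √2 * (t + y) = 0 := by linear_combination 2 * him
    exact (mul_eq_zero.mp this).resolve_left hs.ne'
  have ht : t = -y := by linarith
  subst ht
  have hre' : (n : ℝ) = c - √2 * y := by rw [← hre]; ring
  have hn0 : (0 : ℝ) < n := by rw [hre']; nlinarith [hy.2]
  have hn2 : (n : ℝ) < 2 := by rw [hre']; nlinarith [hy.1, sq2]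
  have hn1 : n = 1 := by
    have a : 0 < n := by exact_mod_cast hn0
    have b : n < 2 := by exact_mod_cast hn2
    omega
  rw [hn, hn1]; simp

lemma q_line {c t : ℝ} (hc : 0 < c) (hc' : c < 1) : qq (c + om * t) ≠ 0 := by
  intro h
  obtain ⟨n, hn⟩ := q_zero h
  have hre := congrArg Complex.re hn
  have him := congrArg Complex.im hn
  simp [om_re, om_im] at hre him
  subst him
  simp at hre
  rw [hre] at hc hc'
  have a : 0 < n := by exact_mod_cast hc
  have b : n < 1 := by exact_mod_cast hc'
  omega

lemma qq_diff : Differentiable ℂ qq := by unfold qq; fun_prop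

lemma q_lower {c : ℝ} (hc : 0 < c) (hc' : c < 1) :
    ∃ δ : ℝ, 0 < δ ∧ ∀ t : ℝ, δ ≤ ‖qq (c + om * t)‖ := by
  have hcont : Continuous (fun t : ℝ => ‖qq (c + om * t)‖) :=
    (qq_diff.continuous.comp (by fun_prop)).norm
  obtain ⟨t0, _, h0⟩ := (isCompact_Icc (a := (-3 : ℝ)) (b := 3)).exists_isMinOn ⟨0, by norm_num, by norm_num⟩
    hcont.continuousOn
  refine ⟨min 1 ‖qq (c + om * t0)‖, lt_min one_pos (norm_pos_iff.mpr (q_line hc hc')), fun t => ?_⟩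
  by_cases ht : 3 ≤ |t|
  · have := q_bound c t 0 (by simp) ht
    simp at this
    exact (min_le_left _ _).trans this
  · push Not at ht
    exact (min_le_right _ _).trans (h0 (abs_le.mp ht.le))

lemma num_cont2 : Continuous (fun p : ℂ × ℂ => num p.1 p.2) := by unfold num; fun_prop

noncomputable def FF (z u : ℂ) : ℂ := num z u / qq u

lemma FF_cont {c : ℝ} (hc : 0 < c) (hc' : c < 1) (z : ℂ) :
    Continuous (fun t : ℝ => FF z (c + om * t)) := by
  unfold FF
  apply Continuous.div
  · unfold num; fun_prop
  · exact qq_diff.continuous.comp (by fun_prop)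
  · intro t; exact q_line hc hc'

lemma FF_bound {c : ℝ} (hc : 0 < c) (hc' : c < 1) :
    ∃ δ : ℝ, 0 < δ ∧ ∀ (M : ℝ) (z : ℂ) (t : ℝ), ‖z‖ ≤ M →
      ‖FF z (c + om * t)‖ ≤ KK M * Real.exp (-1 * t ^ 2) / δ := by
  obtain ⟨δ, hδ, h⟩ := q_lower hc hc'
  refine ⟨δ, hδ, fun M z t hM => ?_⟩
  have h1 := num_bound z M c t 0 hM hc hc' (by simp)
  simp only [ofReal_zero, zero_mul, add_zero] at h1
  rw [FF, norm_div]
  exact div_le_div₀ ((norm_nonneg _).trans h1) h1 hδ (h t)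

lemma bound_int (K δ : ℝ) : Integrable (fun t : ℝ => K * Real.exp (-1 * t ^ 2) / δ) :=
  ((integrable_exp_neg_mul_sq one_pos).const_mul K).div_const δ

lemma FF_int {c : ℝ} (hc : 0 < c) (hc' : c < 1) (z : ℂ) :
    Integrable (fun t : ℝ => FF z (c + om * t)) := by
  obtain ⟨δ, hδ, h⟩ := FF_bound hc hc'
  exact (bound_int (KK ‖z‖) δ).mono' (FF_cont hc hc' z).aestronglyMeasurable
    (Filter.Eventually.of_forall fun t => h _ z t le_rfl)

noncomputable def LL (c : ℝ) (z : ℂ) : ℂ := ∫ t : ℝ, FF z (c + om * t)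

lemma LL_cont {c : ℝ} (hc : 0 < c) (hc' : c < 1) : Continuous (LL c) := by
  obtain ⟨δ, hδ, h⟩ := FF_bound hc hc'
  rw [continuous_iff_continuousAt]
  intro z0
  unfold LL
  apply MeasureTheory.continuousAt_of_dominated (bound := fun t => KK (‖z0‖ + 1) * Real.exp (-1 * t ^ 2) / δ)
  · exact Filter.Eventually.of_forall fun z => (FF_cont hc hc' z).aestronglyMeasurable
  · have : ∀ᶠ z in nhds z0, ‖z‖ < ‖z0‖ + 1 :=
      continuous_norm.continuousAt.eventually_lt continuousAt_const (by simp)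
    filter_upwards [this] with z hz
    exact Filter.Eventually.of_forall fun t => h _ z t hz.le
  · exact bound_int _ _
  · refine Filter.Eventually.of_forall fun t => Continuous.continuousAt ?_
    unfold FF num
    fun_prop

lemma FF_shift (z u : ℂ) (h : qq u ≠ 0) :
    FF z (u + 1) = Complex.exp (2 * π * I * z) * (FF z u + num (z + 1 / 2) u) := by
  set E := Complex.exp ((π : ℂ) * I * u) with hE
  set E' := Complex.exp (-((π : ℂ) * I * u)) with hE'
  have hpi : Complex.exp ((π : ℂ) * I) = -1 := Complex.exp_pi_mul_I
  have hpi' : Complex.exp (-((π : ℂ) * I)) = -1 := by rw [Complex.exp_neg, hpi]; norm_num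
  have q0 : qq u = E - E' := rfl
  have q1 : qq (u + 1) = -(E - E') := by
    rw [qq]
    rw [show (π : ℂ) * I * (u + 1) = π * I * u + π * I by ring, neg_add,
      Complex.exp_add, Complex.exp_add, hpi, hpi']
    ring
  set N := num (z + 1 / 2) u with hN
  have n0 : num z u = N * E' := by
    rw [hN, num, num, hE', ← Complex.exp_add]; congr 1; ring
  have n1 : num z (u + 1) = -(Complex.exp (2 * π * I * z) * (N * E)) := by
    have : -(Complex.exp (2 * π * I * z) * (N * E)) =
        Complex.exp ((π : ℂ) * I) * (Complex.exp (2 * π * I * z) * (N * E)) := by rw [hpi]; ring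
    rw [this, hN, num, num, hE, ← Complex.exp_add, ← Complex.exp_add, ← Complex.exp_add]
    congr 1; ring
  rw [FF, FF, q1, n0, n1, q0]
  rw [q0] at h
  field_simp
  ring

lemma num_quad (c : ℝ) (z : ℂ) (t : ℝ) : num z (c + om * t) =
    Complex.exp (-(π : ℂ) * t ^ 2 + (om * (2 * π * I * c + 2 * π * I * z)) * t
      + (π * I * c ^ 2 + 2 * π * I * z * c)) := by
  rw [num]; congr 1
  linear_combination (π : ℂ) * I * t ^ 2 * om_sq + (π : ℂ) * t ^ 2 * I_mul_I

lemma num_int (c : ℝ) (z : ℂ) : Integrable (fun t : ℝ => num z (c + om * t)) := by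
  simp_rw [num_quad]
  exact integrable_cexp_quadratic (by simpa using Real.pi_pos) _ _

lemma num_val (c : ℝ) (z : ℂ) : ∫ t : ℝ, num z (c + om * t) = Complex.exp (-(π * I * z ^ 2)) := by
  simp_rw [num_quad]
  rw [integral_cexp_quadratic (by simpa using Real.pi_pos)]
  have hpi : (π : ℂ) ≠ 0 := by exact_mod_cast Real.pi_ne_zero
  rw [neg_neg, div_self hpi, one_cpow, one_mul]
  congr 1
  field_simp
  rw [om_sq]
  linear_combination (4 * (c + z) ^ 2 : ℂ) * I_mul_I

noncomputable def pp (z u : ℂ) : ℂ := Complex.exp (2 * π * I * z * u)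

noncomputable def HH (z u : ℂ) : ℂ := num 0 u * dslope (pp z) 1 u / dslope qq 1 u

lemma qq_one : qq 1 = 0 := by
  rw [qq, mul_one, Complex.exp_neg, Complex.exp_pi_mul_I]; norm_num

lemma HH_eq (z u : ℂ) (h : u ≠ 1) :
    HH z u = FF z u - Complex.exp (2 * π * I * z) * FF 0 u := by
  have h' : u - 1 ≠ 0 := sub_ne_zero.mpr h
  have e : num z u = num 0 u * pp z u := by
    rw [num, num, pp, ← Complex.exp_add]; congr 1; ring
  have e1 : pp z 1 = Complex.exp (2 * π * I * z) := by rw [pp, mul_one]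
  rw [HH, dslope_of_ne _ h, dslope_of_ne _ h, slope_def_field, slope_def_field, qq_one, sub_zero, FF, FF, e, e1,
    mul_div_assoc, div_div_div_cancel_right₀ h']
  ring

lemma dq_one : dslope qq 1 1 ≠ 0 := by
  rw [dslope_same]
  have h1 : HasDerivAt (fun u : ℂ => (π : ℂ) * I * u) ((π : ℂ) * I) 1 := by
    simpa using (hasDerivAt_id (1 : ℂ)).const_mul ((π : ℂ) * I)
  have h2 := h1.cexp.sub h1.neg.cexp
  have h3 : deriv qq 1 = _ := h2.deriv
  rw [h3]
  simp [Complex.exp_neg, Complex.exp_pi_mul_I]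
  intro h
  have hpi : (π : ℂ) * I ≠ 0 := by simp [Real.pi_ne_zero]
  apply hpi
  linear_combination -h / 2

lemma dslope_diff {f : ℂ → ℂ} (hf : Differentiable ℂ f) : Differentiable ℂ (dslope f 1) := by
  rw [← differentiableOn_univ] at hf ⊢
  exact (Complex.differentiableOn_dslope Filter.univ_mem).mpr hf

lemma HH_diff {c : ℝ} (hc : 0 < c) (hc' : c < 1) (z : ℂ) :
    DifferentiableOn ℂ (fun w => HH z (c + om * w)) {w | w.im ∈ Icc (-(√2 / 2)) 0} := by
  intro w hw
  apply DifferentiableAt.differentiableWithinAt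
  have hp : Differentiable ℂ (dslope (pp z) 1) := dslope_diff (by unfold pp; fun_prop)
  have hq := dslope_diff qq_diff
  have hn : Differentiable ℂ (num 0) := by unfold num; fun_prop
  have hne : dslope qq 1 (c + om * w) ≠ 0 := by
    by_cases h1 : (c + om * w) = 1
    · rw [h1]; exact dq_one
    · rw [dslope_of_ne _ h1, slope_def_field, qq_one, sub_zero]
      refine div_ne_zero (fun h0 => h1 ?_) (sub_ne_zero.mpr h1)
      rw [← re_add_im w] at h0 ⊢
      exact q_strip hc hc' hw h0
  unfold HH
  have d1 : DifferentiableAt ℂ (fun w : ℂ => num 0 (c + om * w) * dslope (pp z) 1 (c + om * w)) w := by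
    fun_prop
  have d2 : DifferentiableAt ℂ (fun w : ℂ => dslope qq 1 (c + om * w)) w := by
    fun_prop
  exact d1.fun_div d2 hne

lemma main_id {c : ℝ} (hc : 0 < c) (hc' : c < 1) (z : ℂ) :
    LL c z * (Complex.exp (2 * π * I * z) - 1) = Complex.exp (2 * π * I * z) *
      (Complex.exp (-(π * I * (1 / 2) ^ 2)) - Complex.exp (-(π * I * (z + 1 / 2) ^ 2))) := by
  set e := Complex.exp (2 * π * I * z) with he
  have hs2 : √2 / 2 ≤ 1 := by
    have : √2 ≤ 2 := by rw [Real.sqrt_le_left] <;> norm_num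
    linarith
  have hone : ∀ t : ℝ, (c + om * t : ℂ) ≠ 1 := by
    intro t h
    have := q_line (t := t) hc hc'
    rw [h, qq_one] at this
    exact this rfl
  have h1int : ∀ ζ : ℂ, Integrable (fun t : ℝ => FF ζ (c + om * t) + num (ζ + 1 / 2) (c + om * t)) :=
    fun ζ => (FF_int hc hc' ζ).add (num_int c _)
  have hb : (fun t : ℝ => HH z (c + om * (t + (0 : ℝ) * I)))
      = fun t : ℝ => FF z (c + om * t) - e * FF 0 (c + om * t) := by
    ext t
    rw [ofReal_zero, zero_mul, add_zero, HH_eq _ _ (hone t)]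
  have ha : (fun t : ℝ => HH z (c + om * (t + (-(√2 / 2) : ℝ) * I)))
      = fun t : ℝ => (fun s : ℝ => e * (FF z (c + om * s) + num (z + 1 / 2) (c + om * s))
        - e * (FF 0 (c + om * s) + num (0 + 1 / 2) (c + om * s))) (t - √2 / 2) := by
    ext t
    have eu : (c + om * (t + (-(√2 / 2) : ℝ) * I) : ℂ) = (c + om * ((t - √2 / 2 : ℝ) : ℂ)) + 1 := by
      apply Complex.ext
      · simp [om_re, om_im]; nlinarith [sq2]
      · simp [om_re, om_im]; nlinarith [sq2]
    have hne : (c + om * ((t - √2 / 2 : ℝ) : ℂ)) + 1 ≠ 1 := by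
      intro h
      have h0 : (c + om * ((t - √2 / 2 : ℝ) : ℂ)) = 0 := by linear_combination h
      have := q_line (t := t - √2 / 2) hc hc'
      rw [h0] at this
      exact this (by simp [qq])
    rw [eu, HH_eq _ _ hne, FF_shift _ _ (q_line hc hc'), FF_shift _ _ (q_line hc hc')]
    simp
    ring
  have hS : Integrable (fun s : ℝ => e * (FF z (c + om * s) + num (z + 1 / 2) (c + om * s))
        - e * (FF 0 (c + om * s) + num (0 + 1 / 2) (c + om * s))) :=
    ((h1int z).const_mul e).sub ((h1int 0).const_mul e)
  have key := strip_shift (fun w => HH z (c + om * w)) (-(√2 / 2)) 0 (KK ‖z‖ + ‖e‖ * KK 0)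
    (by have := Real.sqrt_nonneg 2; linarith) (HH_diff hc hc' z) (by rw [ha]; exact hS.comp_sub_right (√2 / 2))
    (by rw [hb]; exact (FF_int hc hc' z).sub ((FF_int hc hc' 0).const_mul e))
    (by
      intro t y ht hy
      have hy1 : |y| ≤ 1 := abs_le.mpr ⟨by linarith [hy.1], by linarith [hy.2]⟩
      have hq := q_bound c t y hy1 ht
      have hne : (c + om * (t + y * I) : ℂ) ≠ 1 := by
        intro h; rw [h, qq_one, norm_zero] at hq; linarith
      have hF : ∀ ζ : ℂ, ‖FF ζ (c + om * (t + y * I))‖ ≤ KK ‖ζ‖ * Real.exp (-1 * t ^ 2) := by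
        intro ζ
        rw [FF, norm_div]
        exact (div_le_self (norm_nonneg _) hq).trans (num_bound ζ _ c t y le_rfl hc hc' hy1)
      have h0 := hF 0
      rw [norm_zero] at h0
      show ‖HH z (c + om * (t + y * I))‖ ≤ _
      rw [HH_eq _ _ hne]
      refine (norm_sub_le _ _).trans ?_
      rw [norm_mul, add_mul, mul_assoc ‖e‖]
      exact add_le_add (hF z) (mul_le_mul_of_nonneg_left h0 (norm_nonneg _)))
  beta_reduce at key
  rw [ha, hb, integral_sub_right_eq_self
    (fun s : ℝ => e * (FF z (c + om * s) + num (z + 1 / 2) (c + om * s))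
        - e * (FF 0 (c + om * s) + num (0 + 1 / 2) (c + om * s))),
    integral_sub ((h1int z).const_mul e) ((h1int 0).const_mul e),
    integral_sub (FF_int hc hc' z) ((FF_int hc hc' 0).const_mul e)] at key
  simp only [integral_const_mul] at key
  rw [integral_add (FF_int hc hc' z) (num_int c _), integral_add (FF_int hc hc' 0) (num_int c _),
    num_val, num_val, zero_add] at key
  simp only [← LL.eq_1] at key
  linear_combination key

lemma int_ne_of {z : ℂ} (h : z ∉ Set.range (Int.cast : ℤ → ℂ)) : Complex.exp (2 * π * I * z) ≠ 1 := by
  intro h1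
  obtain ⟨n, hn⟩ := Complex.exp_eq_one_iff.mp h1
  apply h
  refine ⟨n, ?_⟩
  have : (2 * π * I : ℂ) ≠ 0 := Complex.two_pi_I_ne_zero
  apply mul_left_cancel₀ this
  rw [hn]; ring

lemma om_exp : om = Complex.exp (π * I / 4) := by
  rw [om]; congr 1; push_cast; ring

lemma conj_om : (starRingEnd ℂ) om = Complex.exp (-(π * I / 4)) := by
  rw [om_exp, ← Complex.exp_conj]; congr 1; simp only [map_div₀, map_mul, Complex.conj_I, Complex.conj_ofReal, map_ofNat]; ring

lemma closed {c₁ c₂ : ℝ} (hc₁ : 0 < c₁) (hc₁' : c₁ < 1) (hc₂ : 0 < c₂) (hc₂' : c₂ < 1) (z : ℂ) :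
    LL c₁ z * om = -(starRingEnd ℂ) om * Complex.exp (-(π * I * z ^ 2) - π * I * z) *
      (starRingEnd ℂ) (LL c₂ (-(starRingEnd ℂ) z - 1)) := by
  have hd : Dense (Set.range (Int.cast : ℤ → ℂ))ᶜ := (Set.countable_range _).dense_compl ℝ
  have c1 := LL_cont hc₁ hc₁'
  have c2 := LL_cont hc₂ hc₂'
  have hcj : Continuous (starRingEnd ℂ) := Complex.continuous_conj
  refine congrFun (Continuous.ext_on hd
    (f := fun z => LL c₁ z * om) (g := fun z => -(starRingEnd ℂ) om * Complex.exp (-(π * I * z ^ 2) - π * I * z) *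
      (starRingEnd ℂ) (LL c₂ (-(starRingEnd ℂ) z - 1))) (by fun_prop) (by fun_prop) ?_) z
  intro z hz
  have hne := sub_ne_zero.mpr (int_ne_of hz)
  have m1 := main_id hc₁ hc₁' z
  have m2 := congrArg (starRingEnd ℂ) (main_id hc₂ hc₂' (-(starRingEnd ℂ) z - 1))
  set X := LL c₂ (-(starRingEnd ℂ) z - 1)
  simp only [map_mul, map_sub, map_one, ← Complex.exp_conj, map_neg, map_pow, map_add, map_div₀,
    Complex.conj_conj, Complex.conj_I, Complex.conj_ofReal, map_ofNat] at m2
  have e1 : Complex.exp (2 * π * -I * (-z - 1)) = Complex.exp (2 * π * I * z) := by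
    rw [show (2 * π * -I * (-z - 1) : ℂ) = 2 * π * I * z + 2 * π * I by ring, Complex.exp_add,
      Complex.exp_two_pi_mul_I, mul_one]
  rw [e1] at m2
  apply mul_right_cancel₀ hne
  simp only []
  have l : LL c₁ z * om * (Complex.exp (2 * π * I * z) - 1) = Complex.exp (2 * π * I * z) *
      (1 - Complex.exp (-(π * I * z ^ 2) - π * I * z)) := by
    rw [mul_right_comm, m1, om_exp, mul_assoc, sub_mul, ← Complex.exp_add, ← Complex.exp_add]
    congr 2
    · convert Complex.exp_zero using 2; ring
    · congr 1; ring
  have r : -(starRingEnd ℂ) om * Complex.exp (-(π * I * z ^ 2) - π * I * z) *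
      (starRingEnd ℂ) X * (Complex.exp (2 * π * I * z) - 1) = Complex.exp (2 * π * I * z) *
      (1 - Complex.exp (-(π * I * z ^ 2) - π * I * z)) := by
    rw [mul_assoc, m2, conj_om, neg_mul, ← Complex.exp_add, neg_mul, mul_left_comm, ← mul_neg, mul_sub,
      ← Complex.exp_add, ← Complex.exp_add, neg_sub]
    congr 2
    · convert Complex.exp_zero using 2; ring
    · congr 1; ring
  rw [l, r]

lemma rhs_pt (z v : ℂ) (hq : qq v ≠ 0) :
    Complex.exp (-((π : ℂ) * I * ((starRingEnd ℂ) v) ^ 2) + (π : ℂ) * I * (starRingEnd ℂ) v) /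
        (Complex.exp (-(2 * (π : ℂ) * I * (starRingEnd ℂ) v)) - 1) *
      Complex.exp (-((π : ℂ) * I * z ^ 2) + 2 * (π : ℂ) * I * ((starRingEnd ℂ) v - 1 / 2) * z)
    = Complex.exp (-(π * I * z ^ 2) - π * I * z) *
      (starRingEnd ℂ) (FF (-(starRingEnd ℂ) z - 1) v) := by
  have hq' : (starRingEnd ℂ) (qq v) ≠ 0 := (map_ne_zero _).mpr hq
  rw [FF, map_div₀]
  rw [num, ← Complex.exp_conj]
  have eq : (starRingEnd ℂ) (qq v) = Complex.exp (π * I * (starRingEnd ℂ) v) *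
      (Complex.exp (-(2 * (π : ℂ) * I * (starRingEnd ℂ) v)) - 1) := by
    rw [qq, map_sub, ← Complex.exp_conj, ← Complex.exp_conj, mul_sub, ← Complex.exp_add, mul_one]
    simp only [map_mul, map_neg, Complex.conj_I, Complex.conj_ofReal]
    congr 2 <;> ring
  rw [eq] at hq' ⊢
  obtain ⟨h1, h2⟩ := mul_ne_zero_iff.mp hq'
  rw [div_mul_eq_mul_div, ← mul_div_assoc, div_eq_div_iff h2 hq', ← mul_assoc, ← Complex.exp_add,
    ← Complex.exp_add, ← Complex.exp_add]
  congr 2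
  simp only [map_mul, map_neg, map_add, map_sub, map_pow, map_one, map_ofNat, Complex.conj_I, Complex.conj_ofReal, Complex.conj_conj]
  ring

lemma exp34 : Complex.exp (((3 * π / 4 : ℝ) : ℂ) * I) = -(starRingEnd ℂ) om := by
  rw [conj_om, show (((3 * π / 4 : ℝ) : ℂ) * I) = π * I + -(π * I / 4) by push_cast; ring,
    Complex.exp_add, Complex.exp_pi_mul_I]
  ring

/-- The integral transformation formula of the Mordell integral specialized to
`τ = 1`, `x = z + 1/2`. -/
theorem mordell_transform_special (z : ℂ) (c₁ c₂ : ℝ)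
    (hc₁ : 0 < c₁) (hc₁' : c₁ < 1) (hc₂ : 0 < c₂) (hc₂' : c₂ < 1) :
    lineInt c₁ (π/4) (fun u =>
      Complex.exp ((π : ℂ) * Complex.I * u ^ 2 + 2 * (π : ℂ) * Complex.I * z * u) /
        (Complex.exp ((π : ℂ) * Complex.I * u) - Complex.exp (-((π : ℂ) * Complex.I * u)))) =
    lineInt c₂ (3 * π / 4) (fun u =>
      Complex.exp (-((π : ℂ) * Complex.I * u ^ 2) + (π : ℂ) * Complex.I * u) /
        (Complex.exp (-(2 * (π : ℂ) * Complex.I * u)) - 1) *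
      Complex.exp (-((π : ℂ) * Complex.I * z ^ 2) +
        2 * (π : ℂ) * Complex.I * (u - 1 / 2) * z)) := by

  have hL : ∀ f : ℂ → ℂ, lineInt c₁ (π / 4) f = (∫ t : ℝ, f (c₁ + om * t)) * om := by
    intro f
    rw [lineInt, ← integral_mul_const]
    rfl
  rw [hL]
  refine (closed hc₁ hc₁' hc₂ hc₂' z).trans ?_
  rw [lineInt, exp34, ← MeasureTheory.integral_neg_eq_self, LL, ← integral_conj, ← integral_const_mul]
  congr 1
  ext t
  have hv : (c₂ : ℂ) + -(starRingEnd ℂ) om * ((-t : ℝ) : ℂ) = (starRingEnd ℂ) (c₂ + om * t) := by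
    simp
  rw [hv, rhs_pt z _ (q_line hc₂ hc₂')]
  ring
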